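/- Let s ≥ 1 be an integer, set r = 2s, and let 𝒜, ℬ be the canonical matrices of size 2r+2 associated to the balanced partition (s, s). Then the ℂ-vector space 𝔤(𝒜,ℬ) of complex (2r+2)×(2r+2) matrices X such that both Xᵀ𝒜 + 𝒜X and Xᵀℬ + ℬX lie in the ℂ-linear span of {𝒜, ℬ} has dimension 2s + 8 = r + 8 over ℂ. -/

import Mathlib

open Matrix

/-- Index type of the canonical pencil associated to the partition `rr`:
pairs `(i, p)` with `i : Fin h` and `0 ≤ p ≤ 2 rᵢ`. -/
abbrev PencilIdx (h : ℕ) (rr : Fin h → ℕ) := (i : Fin h) × Fin (2 * rr i + 1)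

/-- The first canonical matrix `𝒜` of the pencil `L_{(r₁,…,r_h)}`. -/
def canA (h : ℕ) (rr : Fin h → ℕ) : Matrix (PencilIdx h rr) (PencilIdx h rr) ℂ :=
  Matrix.of fun u v =>
    if u.1 = v.1 ∧
        (((v.2 : ℕ) = (u.2 : ℕ) + rr u.1 ∧ (u.2 : ℕ) < rr u.1) ∨
         ((u.2 : ℕ) = (v.2 : ℕ) + rr u.1 ∧ (v.2 : ℕ) < rr u.1)) then 1 else 0

/-- The second canonical matrix `ℬ` of the pencil `L_{(r₁,…,r_h)}`. -/
def canB (h : ℕ) (rr : Fin h → ℕ) : Matrix (PencilIdx h rr) (PencilIdx h rr) ℂ :=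
  Matrix.of fun u v =>
    if u.1 = v.1 ∧
        (((v.2 : ℕ) = (u.2 : ℕ) + rr u.1 + 1 ∧ (u.2 : ℕ) < rr u.1) ∨
         ((u.2 : ℕ) = (v.2 : ℕ) + rr u.1 + 1 ∧ (v.2 : ℕ) < rr u.1)) then 1 else 0


/-- The ℂ-linear map `X ↦ XᵀM + MX`. -/
noncomputable def congrDeriv {n : Type*} [Fintype n] (M : Matrix n n ℂ) :
    Matrix n n ℂ →ₗ[ℂ] Matrix n n ℂ where
  toFun X := Xᵀ * M + M * X
  map_add' X Y := by
    simp only [Matrix.transpose_add, Matrix.add_mul, Matrix.mul_add]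
    abel
  map_smul' c X := by
    simp only [Matrix.transpose_smul, Matrix.smul_mul, Matrix.mul_smul, smul_add,
      RingHom.id_apply]

/-- The Lie algebra `𝔤(A,B)` of the stabilizer of the pencil spanned by `A` and `B`,
as a ℂ-subspace of the space of matrices: all `X` such that `XᵀA + AX` and
`XᵀB + BX` lie in the span of `{A, B}`. -/
noncomputable def stabAlg {n : Type*} [Fintype n] (A B : Matrix n n ℂ) :
    Submodule ℂ (Matrix n n ℂ) :=
  Submodule.comap (congrDeriv A) (Submodule.span ℂ {A, B}) ⊓
  Submodule.comap (congrDeriv B) (Submodule.span ℂ {A, B})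



/-- auxiliary index -/
abbrev BIdx (s : ℕ) := (Fin 2 × Fin s) ⊕ (Fin 2 × Fin (s + 1))

def bE (s : ℕ) : Matrix (Fin 2 × Fin s) (Fin 2 × Fin (s + 1)) ℂ :=
  Matrix.of fun u v => if (v.1, v.2) = (u.1, u.2.castSucc) then 1 else 0

def bF (s : ℕ) : Matrix (Fin 2 × Fin s) (Fin 2 × Fin (s + 1)) ℂ :=
  Matrix.of fun u v => if (v.1, v.2) = (u.1, u.2.succ) then 1 else 0

def bA (s : ℕ) : Matrix (BIdx s) (BIdx s) ℂ := fromBlocks 0 (bE s) (bE s)ᵀ 0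
def bB (s : ℕ) : Matrix (BIdx s) (BIdx s) ℂ := fromBlocks 0 (bF s) (bF s)ᵀ 0

theorem bE_mul {s : ℕ} {k : Type*} (M : Matrix (Fin 2 × Fin (s+1)) k ℂ) (i p x) :
    (bE s * M) (i, p) x = M (i, p.castSucc) x := by
  simp [Matrix.mul_apply, bE]

theorem bF_mul {s : ℕ} {k : Type*} (M : Matrix (Fin 2 × Fin (s+1)) k ℂ) (i p x) :
    (bF s * M) (i, p) x = M (i, p.succ) x := by
  simp [Matrix.mul_apply, bF]

theorem mul_bE_castSucc {s : ℕ} {k : Type*} (M : Matrix k (Fin 2 × Fin s) ℂ) (i p x) :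
    (M * bE s) x (i, Fin.castSucc p) = M x (i, p) := by
  rw [Matrix.mul_apply, Finset.sum_eq_single (i, p)]
  · simp [bE]
  · rintro ⟨j, q⟩ - h
    simp only [bE, Matrix.of_apply, Prod.mk.injEq, Fin.castSucc_inj]
    rw [if_neg, mul_zero]
    rintro ⟨rfl, rfl⟩; exact h rfl
  · simp

theorem mul_bE_last {s : ℕ} {k : Type*} (M : Matrix k (Fin 2 × Fin s) ℂ) (i x) :
    (M * bE s) x (i, Fin.last s) = 0 := by
  rw [Matrix.mul_apply]
  apply Finset.sum_eq_zero
  rintro ⟨j, q⟩ -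
  simp only [bE, Matrix.of_apply, Prod.mk.injEq]
  rw [if_neg, mul_zero]
  rintro ⟨-, h⟩; exact (Fin.castSucc_lt_last q).ne h.symm

theorem mul_bF_succ {s : ℕ} {k : Type*} (M : Matrix k (Fin 2 × Fin s) ℂ) (i p x) :
    (M * bF s) x (i, Fin.succ p) = M x (i, p) := by
  rw [Matrix.mul_apply, Finset.sum_eq_single (i, p)]
  · simp [bF]
  · rintro ⟨j, q⟩ - h
    simp only [bF, Matrix.of_apply, Prod.mk.injEq, Fin.succ_inj]
    rw [if_neg, mul_zero]
    rintro ⟨rfl, rfl⟩; exact h rfl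
  · simp

theorem mul_bF_zero {s : ℕ} {k : Type*} (M : Matrix k (Fin 2 × Fin s) ℂ) (i x) :
    (M * bF s) x (i, 0) = 0 := by
  rw [Matrix.mul_apply]
  apply Finset.sum_eq_zero
  rintro ⟨j, q⟩ -
  simp only [bF, Matrix.of_apply, Prod.mk.injEq]
  rw [if_neg, mul_zero]
  rintro ⟨-, h⟩; exact (Fin.succ_ne_zero q) h.symm

/-- block form of membership -/
theorem mem_stab_iff {s : ℕ} (P : Matrix (Fin 2 × Fin s) (Fin 2 × Fin s) ℂ) (Q R T) :
    fromBlocks P Q R T ∈ stabAlg (bA s) (bB s) ↔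
      ((bE s * R)ᵀ + bE s * R = 0 ∧ (bF s * R)ᵀ + bF s * R = 0) ∧
      (Qᵀ * bE s + (Qᵀ * bE s)ᵀ = 0 ∧ Qᵀ * bF s + (Qᵀ * bF s)ᵀ = 0) ∧
      ∃ a b c d : ℂ, (bE s * T + Pᵀ * bE s = a • bE s + b • bF s) ∧
        (bF s * T + Pᵀ * bF s = c • bE s + d • bF s) := by
  have key : ∀ (M : Matrix (Fin 2 × Fin s) (Fin 2 × Fin (s + 1)) ℂ) (a b : ℂ),
      (a • bA s + b • bB s = (fromBlocks P Q R T)ᵀ * fromBlocks 0 M Mᵀ 0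
        + fromBlocks 0 M Mᵀ 0 * fromBlocks P Q R T) ↔
      ((M * R)ᵀ + M * R = 0 ∧ Qᵀ * M + (Qᵀ * M)ᵀ = 0 ∧
        M * T + Pᵀ * M = a • bE s + b • bF s) := by
    intro M a b
    simp only [bA, bB, fromBlocks_transpose, fromBlocks_multiply, fromBlocks_smul,
      fromBlocks_add, fromBlocks_inj, Matrix.transpose_mul, Matrix.transpose_transpose,
      Matrix.mul_zero, Matrix.zero_mul, smul_zero, add_zero, zero_add]
    constructor
    · rintro ⟨h1, h2, h3, h4⟩
      exact ⟨h1.symm, h4.symm, by rw [h2]; exact add_comm _ _⟩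
    · rintro ⟨h1, h2, h3⟩
      refine ⟨h1.symm, by rw [← h3]; exact add_comm _ _, ?_, h2.symm⟩
      have := congrArg Matrix.transpose h3
      simp only [Matrix.transpose_add, Matrix.transpose_smul, Matrix.transpose_mul,
        Matrix.transpose_transpose] at this
      exact this.symm
  have k1 := key (bE s)
  have k2 := key (bF s)
  simp only [stabAlg, Submodule.mem_inf, Submodule.mem_comap, Submodule.mem_span_pair]
  change (∃ a b, a • bA s + b • bB s = (fromBlocks P Q R T)ᵀ * fromBlocks 0 (bE s) (bE s)ᵀ 0
        + fromBlocks 0 (bE s) (bE s)ᵀ 0 * fromBlocks P Q R T) ∧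
     (∃ a b, a • bA s + b • bB s = (fromBlocks P Q R T)ᵀ * fromBlocks 0 (bF s) (bF s)ᵀ 0
        + fromBlocks 0 (bF s) (bF s)ᵀ 0 * fromBlocks P Q R T) ↔ _
  simp only [k1, k2]
  constructor
  · rintro ⟨⟨a, b, h1, h2, h3⟩, ⟨c, d, h4, h5, h6⟩⟩
    exact ⟨⟨h1, h4⟩, ⟨h2, h5⟩, a, b, c, d, h3, h6⟩
  · rintro ⟨⟨h1, h4⟩, ⟨h2, h5⟩, a, b, c, d, h3, h6⟩
    exact ⟨⟨a, b, h1, h2, h3⟩, ⟨c, d, h4, h5, h6⟩⟩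

theorem Q_zero {s : ℕ} (Q : Matrix (Fin 2 × Fin s) (Fin 2 × Fin (s + 1)) ℂ)
    (h1 : Qᵀ * bE s + (Qᵀ * bE s)ᵀ = 0) (h2 : Qᵀ * bF s + (Qᵀ * bF s)ᵀ = 0) : Q = 0 := by
  have a1 : ∀ i p j q, Q (i, p) (j, Fin.castSucc q) = - Q (j, q) (i, Fin.castSucc p) := by
    intro i p j q
    have := congrFun (congrFun h1 (j, q.castSucc)) (i, p.castSucc)
    simp only [Matrix.add_apply, Matrix.transpose_apply, mul_bE_castSucc, Matrix.zero_apply] at this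
    linear_combination this
  have a2 : ∀ i p j, Q (i, p) (j, Fin.last s) = 0 := by
    intro i p j
    have := congrFun (congrFun h1 (j, Fin.last s)) (i, p.castSucc)
    simpa only [Matrix.add_apply, Matrix.transpose_apply, mul_bE_castSucc, mul_bE_last,
      Matrix.zero_apply, add_zero] using this
  have a3 : ∀ i p j q, Q (i, p) (j, Fin.succ q) = - Q (j, q) (i, Fin.succ p) := by
    intro i p j q
    have := congrFun (congrFun h2 (j, q.succ)) (i, p.succ)
    simp only [Matrix.add_apply, Matrix.transpose_apply, mul_bF_succ, Matrix.zero_apply] at this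
    linear_combination this
  have a4 : ∀ i p j, Q (i, p) (j, 0) = 0 := by
    intro i p j
    have := congrFun (congrFun h2 (j, 0)) (i, p.succ)
    simpa only [Matrix.add_apply, Matrix.transpose_apply, mul_bF_succ, mul_bF_zero,
      Matrix.zero_apply, add_zero] using this
  have main : ∀ n : ℕ, ∀ (q : Fin (s+1)), (q : ℕ) = n → ∀ i p j, Q (i, p) (j, q) = 0 := by
    intro n
    induction n with
    | zero =>
      intro q hq i p j
      have : q = 0 := Fin.ext hq
      subst this; exact a4 i p j
    | succ n ih =>
      intro q hq i p j
      have hn : n < s := by have := q.2; omega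
      have : q = Fin.succ ⟨n, hn⟩ := Fin.ext hq
      subst this
      rw [a3]
      by_cases hp : (p : ℕ) + 1 < s
      · have : p.succ = Fin.castSucc ⟨p + 1, hp⟩ := Fin.ext rfl
        rw [this, a1, neg_neg]
        exact ih _ rfl _ _ _
      · have : p.succ = Fin.last s := Fin.ext (by have := p.2; simp; omega)
        rw [this, a2, neg_zero]
  ext ⟨i, p⟩ ⟨j, q⟩
  exact main _ q rfl i p j

theorem R_form {s : ℕ} (hs : 1 ≤ s) (R : Matrix (Fin 2 × Fin (s + 1)) (Fin 2 × Fin s) ℂ)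
    (h1 : (bE s * R)ᵀ + bE s * R = 0) (h2 : (bF s * R)ᵀ + bF s * R = 0) :
    ∃ f : Fin 2 → Fin 2 → ℕ → ℂ, (∀ i j n, n < 2 * s → f i j n = - f j i n) ∧
      ∀ i q j p, R (i, q) (j, p) = f i j (q + p) := by
  have a1 : ∀ i q j p, R (i, Fin.castSucc q) (j, p) = - R (j, Fin.castSucc p) (i, q) := by
    intro i q j p
    have := congrFun (congrFun h1 (i, q)) (j, p)
    simp only [Matrix.add_apply, Matrix.transpose_apply, bE_mul, Matrix.zero_apply] at this
    linear_combination this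
  have a2 : ∀ i q j p, R (i, Fin.succ q) (j, p) = - R (j, Fin.succ p) (i, q) := by
    intro i q j p
    have := congrFun (congrFun h2 (i, q)) (j, p)
    simp only [Matrix.add_apply, Matrix.transpose_apply, bF_mul, Matrix.zero_apply] at this
    linear_combination this
  -- the hankel property
  have a3 : ∀ i j (q : ℕ) (p : ℕ) (hq : q < s) (hp : p + 1 < s),
      R (i, ⟨q + 1, by omega⟩) (j, ⟨p, by omega⟩) = R (i, ⟨q, by omega⟩) (j, ⟨p + 1, hp⟩) := by
    intro i j q p hq hp
    have e1 := a2 i ⟨q, hq⟩ j ⟨p, by omega⟩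
    have e2 := a1 i ⟨q, hq⟩ j ⟨p + 1, hp⟩
    simp only [Fin.succ_mk, Fin.castSucc_mk] at e1 e2
    rw [e1, e2]
  let f : Fin 2 → Fin 2 → ℕ → ℂ := fun i j n =>
    if h : n < s then R (i, 0) (j, ⟨n, h⟩) else
      if h' : n < 2 * s then R (i, ⟨n - (s - 1), by omega⟩) (j, ⟨s - 1, by omega⟩) else 0
  have hf : ∀ i j (q : ℕ) (hq : q < s + 1) (p : ℕ) (hp : p < s),
      R (i, ⟨q, hq⟩) (j, ⟨p, hp⟩) = f i j (q + p) := by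
    intro i j q
    induction q with
    | zero => intro hq p hp; simp [f, hp]
    | succ q ih =>
      intro hq p hp
      by_cases h : p + 1 < s
      · rw [a3 i j q p (by omega) h, ih]
        congr 1; omega
      · have : p = s - 1 := by omega
        subst this
        simp only [f]
        rw [dif_neg (by omega), dif_pos (by omega)]
        congr 3
        omega
  refine ⟨f, ?_, fun i q j p => hf i j q q.2 p p.2⟩
  intro i j n hn
  by_cases h : n < s
  · have e := a1 i ⟨0, by omega⟩ j ⟨n, h⟩
    simp only [Fin.castSucc_mk, hf] at e
    simpa [add_comm] using e
  · have e := a2 i ⟨n - s, by omega⟩ j ⟨s - 1, by omega⟩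
    simp only [Fin.succ_mk, hf] at e
    rw [show n - s + 1 + (s - 1) = n by omega, show s - 1 + 1 + (n - s) = n by omega] at e
    exact e

theorem T_form {s : ℕ} (T : Matrix (Fin 2 × Fin (s + 1)) (Fin 2 × Fin (s + 1)) ℂ)
    (S : Matrix (Fin 2 × Fin s) (Fin 2 × Fin s) ℂ)
    (h1 : bE s * T + S * bE s = 0) (h2 : bF s * T + S * bF s = 0) :
    (∀ i p j q, T (i, p) (j, q) = if p = q then T (i, 0) (j, 0) else 0) ∧
    (∀ i p j q, S (i, p) (j, q) = if p = q then - T (i, 0) (j, 0) else 0) := by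
  have a1 : ∀ i p j q, S (i, p) (j, q) = - T (i, Fin.castSucc p) (j, Fin.castSucc q) := by
    intro i p j q
    have := congrFun (congrFun h1 (i, p)) (j, q.castSucc)
    simp only [Matrix.add_apply, bE_mul, mul_bE_castSucc, Matrix.zero_apply] at this
    linear_combination this
  have a2 : ∀ i p j q, S (i, p) (j, q) = - T (i, Fin.succ p) (j, Fin.succ q) := by
    intro i p j q
    have := congrFun (congrFun h2 (i, p)) (j, q.succ)
    simp only [Matrix.add_apply, bF_mul, mul_bF_succ, Matrix.zero_apply] at this
    linear_combination this
  have a3 : ∀ i p j, T (i, Fin.castSucc p) (j, Fin.last s) = 0 := by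
    intro i p j
    have := congrFun (congrFun h1 (i, p)) (j, Fin.last s)
    simpa only [Matrix.add_apply, bE_mul, mul_bE_last, Matrix.zero_apply, add_zero] using this
  have a4 : ∀ i p j, T (i, Fin.succ p) (j, 0) = 0 := by
    intro i p j
    have := congrFun (congrFun h2 (i, p)) (j, 0)
    simpa only [Matrix.add_apply, bF_mul, mul_bF_zero, Matrix.zero_apply, add_zero] using this
  have a5 : ∀ i j (p q : ℕ) (hp : p < s) (hq : q < s),
      T (i, ⟨p + 1, by omega⟩) (j, ⟨q + 1, by omega⟩) = T (i, ⟨p, by omega⟩) (j, ⟨q, by omega⟩) := by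
    intro i j p q hp hq
    have e1 := a1 i ⟨p, hp⟩ j ⟨q, hq⟩
    have e2 := a2 i ⟨p, hp⟩ j ⟨q, hq⟩
    simp only [Fin.succ_mk, Fin.castSucc_mk] at e1 e2
    linear_combination e2 - e1
  -- p = q
  have b1 : ∀ i j (p : ℕ) (hp : p < s + 1), T (i, ⟨p, hp⟩) (j, ⟨p, hp⟩) = T (i, 0) (j, 0) := by
    intro i j p
    induction p with
    | zero => intro hp; rfl
    | succ p ih => intro hp; rw [a5 i j p p (by omega) (by omega), ih]
  -- q < p
  have b2 : ∀ i j (q : ℕ) (hq : q < s + 1) (p : ℕ) (hp : p < s + 1), q < p →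
      T (i, ⟨p, hp⟩) (j, ⟨q, hq⟩) = 0 := by
    intro i j q
    induction q with
    | zero =>
      intro hq p hp h
      obtain ⟨p, rfl⟩ : ∃ p', p = p' + 1 := ⟨p - 1, by omega⟩
      exact a4 i ⟨p, by omega⟩ j
    | succ q ih =>
      intro hq p hp h
      obtain ⟨p, rfl⟩ : ∃ p', p = p' + 1 := ⟨p - 1, by omega⟩
      rw [a5 i j p q (by omega) (by omega)]
      exact ih _ _ _ (by omega)
  -- p < q
  have b3 : ∀ i j (k : ℕ) (p q : ℕ) (hp : p < s + 1) (hq : q < s + 1), p < q → q + k = s →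
      T (i, ⟨p, hp⟩) (j, ⟨q, hq⟩) = 0 := by
    intro i j k
    induction k with
    | zero =>
      intro p q hp hq h hk
      have : q = s := by omega
      subst this
      exact a3 i ⟨p, by omega⟩ j
    | succ k ih =>
      intro p q hp hq h hk
      rw [← a5 i j p q (by omega) (by omega)]
      exact ih _ _ _ _ (by omega) (by omega)
  have c1 : ∀ i p j q, T (i, p) (j, q) = if p = q then T (i, 0) (j, 0) else 0 := by
    intro i p j q
    split_ifs with h
    · subst h; exact b1 i j p p.2
    · rcases lt_or_gt_of_ne (fun h' => h (Fin.ext h')) with h' | h'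
      · exact b3 i j (s - q) p q p.2 q.2 h' (by have := q.2; omega)
      · exact b2 i j q q.2 p p.2 h'
  refine ⟨c1, ?_⟩
  intro i p j q
  rw [a1, c1]
  simp only [Fin.castSucc_inj]
  split_ifs <;> simp

abbrev Par (s : ℕ) := (Fin 4 → ℂ) × (Fin 2 × Fin 2 → ℂ) × (Fin (2 * s) → ℂ)

noncomputable def mT (s : ℕ) (w : Par s) : Matrix (Fin 2 × Fin (s + 1)) (Fin 2 × Fin (s + 1)) ℂ :=
  Matrix.of fun u v => (if u.2 = v.2 then w.2.1 (u.1, v.1) else 0) +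
    if u.1 = v.1 then
      (if (v.2 : ℕ) = u.2 then (u.2 : ℂ) * (w.1 3 - w.1 0) else 0) +
      (if (v.2 : ℕ) = u.2 + 1 then ((s : ℂ) - (u.2 : ℂ)) * w.1 1 else 0) +
      (if (u.2 : ℕ) = v.2 + 1 then (u.2 : ℂ) * w.1 2 else 0)
    else 0

noncomputable def mS (s : ℕ) (w : Par s) : Matrix (Fin 2 × Fin s) (Fin 2 × Fin s) ℂ :=
  Matrix.of fun u v => (if u.2 = v.2 then - w.2.1 (u.1, v.1) else 0) +
    if u.1 = v.1 then
      (if (v.2 : ℕ) = u.2 then w.1 0 - (u.2 : ℂ) * (w.1 3 - w.1 0) else 0) +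
      (if (v.2 : ℕ) = u.2 + 1 then -((s : ℂ) - (u.2 : ℂ) - 1) * w.1 1 else 0) +
      (if (u.2 : ℕ) = v.2 + 1 then -(u.2 : ℂ) * w.1 2 else 0)
    else 0

def sgn2 (i j : Fin 2) : ℂ := if i = j then 0 else if i = 0 then 1 else -1

noncomputable def mR (s : ℕ) (w : Par s) : Matrix (Fin 2 × Fin (s + 1)) (Fin 2 × Fin s) ℂ :=
  Matrix.of fun u v => sgn2 u.1 v.1 * w.2.2 ⟨u.2 + v.2, by omega⟩

noncomputable def mX (s : ℕ) : Par s →ₗ[ℂ] Matrix (BIdx s) (BIdx s) ℂ where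
  toFun w := fromBlocks (mS s w)ᵀ 0 (mR s w) (mT s w)
  map_add' w w' := by
    rw [fromBlocks_add, fromBlocks_inj]
    refine ⟨?_, by simp, ?_, ?_⟩
    · ext u v
      simp only [mS, Matrix.transpose_apply, Matrix.add_apply, Matrix.of_apply, Prod.fst_add,
        Prod.snd_add, Pi.add_apply]
      split_ifs <;> ring
    · ext u v
      simp only [mR, Matrix.add_apply, Matrix.of_apply, Prod.snd_add, Pi.add_apply]
      ring
    · ext u v
      simp only [mT, Matrix.add_apply, Matrix.of_apply, Prod.fst_add,
        Prod.snd_add, Pi.add_apply]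
      split_ifs <;> ring
  map_smul' c w := by
    rw [fromBlocks_smul, fromBlocks_inj]
    refine ⟨?_, by simp, ?_, ?_⟩
    · ext u v
      simp only [mS, Matrix.transpose_apply, Matrix.smul_apply, Matrix.of_apply, Prod.smul_fst,
        Prod.smul_snd, Pi.smul_apply, smul_eq_mul, RingHom.id_apply]
      split_ifs <;> ring
    · ext u v
      simp only [mR, Matrix.smul_apply, Matrix.of_apply, Prod.smul_snd, Pi.smul_apply,
        smul_eq_mul, RingHom.id_apply]
      ring
    · ext u v
      simp only [mT, Matrix.smul_apply, Matrix.of_apply, Prod.smul_fst,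
        Prod.smul_snd, Pi.smul_apply, smul_eq_mul, RingHom.id_apply]
      split_ifs <;> ring

theorem sgn2_anti (i j : Fin 2) : sgn2 i j = - sgn2 j i := by
  fin_cases i <;> fin_cases j <;> simp [sgn2]

theorem mTS_E (s : ℕ) (w : Par s) :
    bE s * mT s w + mS s w * bE s = w.1 0 • bE s + w.1 1 • bF s := by
  ext ⟨i, p⟩ ⟨j, q⟩
  induction q using Fin.lastCases with
  | last =>
    simp only [Matrix.add_apply, bE_mul, mul_bE_last, Matrix.smul_apply, smul_eq_mul]
    simp only [mT, bE, bF, Matrix.of_apply, Prod.mk.injEq, Fin.ext_iff, Fin.val_last,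
      Fin.val_castSucc, Fin.val_succ]
    have hp := p.2
    by_cases hij : i = j
    · subst hij
      by_cases h : s = (p : ℕ) + 1
      · have : (s : ℂ) = (p : ℂ) + 1 := by exact_mod_cast h
        simp (disch := omega) [h]
      · simp (disch := omega) [h, if_neg]
    · simp (disch := omega) [hij, Ne.symm hij, if_neg]
  | cast q =>
    simp only [Matrix.add_apply, bE_mul, mul_bE_castSucc, Matrix.smul_apply, smul_eq_mul]
    simp only [mT, mS, bE, bF, Matrix.of_apply, Prod.mk.injEq, Fin.ext_iff,
      Fin.val_castSucc, Fin.val_succ]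
    by_cases hij : i = j
    · subst hij
      simp only [if_true, true_and]
      split_ifs <;> first | omega | ring
    · have hij' : ¬ (j : ℕ) = i := fun h => hij (Fin.ext h.symm)
      have hij'' : ¬ (i : ℕ) = j := fun h => hij (Fin.ext h)
      simp only [hij', hij'', if_false, false_and]
      split_ifs <;> ring

theorem mTS_F (s : ℕ) (w : Par s) :
    bF s * mT s w + mS s w * bF s = w.1 2 • bE s + w.1 3 • bF s := by
  ext ⟨i, p⟩ ⟨j, q⟩
  induction q using Fin.cases with
  | zero =>
    simp only [Matrix.add_apply, bF_mul, mul_bF_zero, Matrix.smul_apply, smul_eq_mul]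
    simp only [mT, bE, bF, Matrix.of_apply, Prod.mk.injEq, Fin.ext_iff, Fin.val_zero,
      Fin.val_castSucc, Fin.val_succ]
    by_cases hij : (i : ℕ) = j
    · by_cases hp : (p : ℕ) = 0
      · simp [hij, hp, Fin.ext hij]
      · simp [hij, hp, Ne.symm hp]
    · simp [hij, Ne.symm hij]
  | succ q =>
    simp only [Matrix.add_apply, bF_mul, mul_bF_succ, Matrix.smul_apply, smul_eq_mul]
    simp only [mT, mS, bE, bF, Matrix.of_apply, Prod.mk.injEq, Fin.ext_iff,
      Fin.val_castSucc, Fin.val_succ]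
    by_cases hij : i = j
    · subst hij
      simp only [if_true, true_and]
      push_cast
      split_ifs <;> first | omega | ring
    · have hij' : ¬ (j : ℕ) = i := fun h => hij (Fin.ext h.symm)
      have hij'' : ¬ (i : ℕ) = j := fun h => hij (Fin.ext h)
      simp only [hij', hij'', if_false, false_and]
      split_ifs <;> first | omega | ring

theorem mX_mem (s : ℕ) (w : Par s) : mX s w ∈ stabAlg (bA s) (bB s) := by
  change fromBlocks _ _ _ _ ∈ _
  rw [mem_stab_iff]
  refine ⟨⟨?_, ?_⟩, ⟨by simp, by simp⟩, w.1 0, w.1 1, w.1 2, w.1 3, ?_, ?_⟩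
  · ext ⟨i, p⟩ ⟨j, q⟩
    simp only [Matrix.add_apply, Matrix.transpose_apply, bE_mul, Matrix.zero_apply, mR,
      Matrix.of_apply, Fin.val_castSucc]
    rw [sgn2_anti i j]
    simp only [add_comm (p : ℕ)]
    ring
  · ext ⟨i, p⟩ ⟨j, q⟩
    simp only [Matrix.add_apply, Matrix.transpose_apply, bF_mul, Matrix.zero_apply, mR,
      Matrix.of_apply, Fin.val_succ]
    rw [sgn2_anti i j]
    simp only [show (p : ℕ) + 1 + q = q + 1 + p by omega]
    ring
  · rw [Matrix.transpose_transpose, mTS_E]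
  · rw [Matrix.transpose_transpose, mTS_F]

theorem mX_surj (s : ℕ) (hs : 1 ≤ s) (X : Matrix (BIdx s) (BIdx s) ℂ)
    (hX : X ∈ stabAlg (bA s) (bB s)) : ∃ w, mX s w = X := by
  rw [← fromBlocks_toBlocks X] at hX ⊢
  generalize X.toBlocks₁₁ = P at *
  generalize X.toBlocks₁₂ = Q at *
  generalize X.toBlocks₂₁ = R at *
  generalize X.toBlocks₂₂ = T at *
  rw [mem_stab_iff] at hX
  obtain ⟨⟨h1, h2⟩, ⟨h3, h4⟩, a, b, c, d, h5, h6⟩ := hX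
  have hQ := Q_zero Q h3 h4
  obtain ⟨f, hf1, hf2⟩ := R_form hs R h1 h2
  let w0 : Par s := (![a, b, c, d], 0, 0)
  have e1 := mTS_E s w0
  have e2 := mTS_F s w0
  obtain ⟨t1, t2⟩ := T_form (T - mT s w0) (Pᵀ - mS s w0)
    (by
      rw [Matrix.mul_sub, Matrix.sub_mul, sub_add_sub_comm, e1, h5]; simp [w0])
    (by
      rw [Matrix.mul_sub, Matrix.sub_mul, sub_add_sub_comm, e2, h6]; simp [w0])
  let w : Par s := (![a, b, c, d], (fun ij => (T - mT s w0) (ij.1, 0) (ij.2, 0)),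
    fun n => f 0 1 n)
  refine ⟨w, ?_⟩
  change fromBlocks _ _ _ _ = _
  rw [fromBlocks_inj]
  refine ⟨?_, hQ.symm, ?_, ?_⟩
  · rw [← Matrix.transpose_inj, Matrix.transpose_transpose]
    ext ⟨i, p⟩ ⟨j, q⟩
    have := t2 i p j q
    rw [Matrix.sub_apply, sub_eq_iff_eq_add] at this
    rw [this]
    simp only [mS, Matrix.of_apply, w, w0, Pi.zero_apply]
    simp
  · ext ⟨i, q⟩ ⟨j, p⟩
    rw [hf2]
    have hn : (q : ℕ) + p < 2 * s := by omega
    have g00 := hf1 0 0 _ hn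
    have g11 := hf1 1 1 _ hn
    have g10 := hf1 1 0 _ hn
    have g00' : f 0 0 (q + p) = 0 := by linear_combination g00 / 2
    have g11' : f 1 1 (q + p) = 0 := by linear_combination g11 / 2
    simp only [mR, Matrix.of_apply, w]
    fin_cases i <;> fin_cases j <;> simp [sgn2, g00', g11', g10]
  · ext ⟨i, p⟩ ⟨j, q⟩
    have := t1 i p j q
    rw [Matrix.sub_apply, sub_eq_iff_eq_add] at this
    rw [this]
    simp only [mT, Matrix.of_apply, w, w0, Pi.zero_apply]
    simp

theorem mX_inj (s : ℕ) (hs : 1 ≤ s) : Function.Injective (mX s) := by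
  rw [← LinearMap.ker_eq_bot, LinearMap.ker_eq_bot']
  intro w hw
  change fromBlocks _ _ _ _ = 0 at hw
  rw [← fromBlocks_zero, fromBlocks_inj] at hw
  obtain ⟨hS, -, hR, hT⟩ := hw
  obtain ⟨t, rfl⟩ : ∃ t, s = t + 1 := ⟨s - 1, by omega⟩
  have hg : ∀ i j, w.2.1 (i, j) = 0 := by
    intro i j
    have := congrFun (congrFun hT (i, 0)) (j, 0)
    simpa [mT] using this
  have h0 : w.1 0 = 0 := by
    have := congrFun (congrFun hS (0, 0)) (0, 0)
    simpa [mS, hg] using this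
  have h1 : w.1 1 = 0 := by
    have := congrFun (congrFun hT (0, 0)) (0, 1)
    have h : (t : ℂ) + 1 ≠ 0 := by exact_mod_cast Nat.succ_ne_zero t
    simpa [mT, hg, h] using this
  have h2 : w.1 2 = 0 := by
    have := congrFun (congrFun hT (0, 1)) (0, 0)
    simpa [mT, hg] using this
  have h3 : w.1 3 = 0 := by
    have := congrFun (congrFun hT (0, 1)) (0, 1)
    simpa [mT, hg, h0] using this
  have hf : ∀ n, w.2.2 n = 0 := by
    intro n
    by_cases h : (n : ℕ) < t + 1
    · have := congrFun (congrFun hR (0, 0)) (1, ⟨n, h⟩)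
      simpa [mR, sgn2] using this
    · have := congrFun (congrFun hR (0, ⟨n - t, by omega⟩)) (1, ⟨t, by omega⟩)
      simpa [mR, sgn2, show (n : ℕ) - t + t = n by omega] using this
  refine Prod.ext ?_ (Prod.ext ?_ ?_)
  · funext k; fin_cases k <;> assumption
  · funext ⟨i, j⟩; exact hg i j
  · funext n; exact hf n

theorem finrank_block (s : ℕ) (hs : 1 ≤ s) :
    Module.finrank ℂ (stabAlg (bA s) (bB s)) = 2 * s + 8 := by
  have : stabAlg (bA s) (bB s) = LinearMap.range (mX s) := by
    ext X
    constructor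
    · intro h; exact mX_surj s hs X h
    · rintro ⟨w, rfl⟩; exact mX_mem s w
  rw [this, LinearMap.finrank_range_of_inj (mX_inj s hs)]
  simp
  omega

theorem ss_val (s : ℕ) (i : Fin 2) : (![s, s] : Fin 2 → ℕ) i = s := by
  fin_cases i <;> rfl

def eFun (s : ℕ) : BIdx s → PencilIdx 2 ![s, s]
  | Sum.inl (i, p) => ⟨i, ⟨p, by rw [ss_val]; omega⟩⟩
  | Sum.inr (i, p) => ⟨i, ⟨s + p, by rw [ss_val]; omega⟩⟩

theorem pidx_ext {s : ℕ} {u v : PencilIdx 2 ![s, s]} (h1 : u.1 = v.1)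
    (h2 : (u.2 : ℕ) = v.2) : u = v := by
  obtain ⟨i, p⟩ := u
  obtain ⟨j, q⟩ := v
  simp only at h1
  subst h1
  congr 1
  exact Fin.ext h2

theorem eFun_bij (s : ℕ) : Function.Bijective (eFun s) := by
  constructor
  · intro u v h
    have h1 := congrArg (fun x => x.1) h
    have h2 := congrArg (fun x => (x.2 : ℕ)) h
    rcases u with ⟨i, p⟩ | ⟨i, p⟩ <;> rcases v with ⟨j, q⟩ | ⟨j, q⟩ <;>
      simp only [eFun] at h1 h2
    · rw [h1, Fin.ext h2]
    · omega
    · omega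
    · rw [h1, show p = q from Fin.ext (by omega)]
  · rintro ⟨i, p, hp⟩
    have hp' := hp
    rw [ss_val] at hp'
    by_cases h : p < s
    · exact ⟨Sum.inl (i, ⟨p, h⟩), pidx_ext rfl rfl⟩
    · exact ⟨Sum.inr (i, ⟨p - s, by omega⟩), pidx_ext rfl (by simp [eFun]; omega)⟩

theorem canA_eFun (s : ℕ) (u v) : canA 2 ![s, s] (eFun s u) (eFun s v) = bA s u v := by
  rcases u with ⟨i, p⟩ | ⟨i, p⟩ <;> rcases v with ⟨j, q⟩ | ⟨j, q⟩ <;>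
    simp only [canA, eFun, bA, bE, Matrix.of_apply, fromBlocks_apply₁₁, fromBlocks_apply₁₂,
      fromBlocks_apply₂₁, fromBlocks_apply₂₂, ss_val, Matrix.zero_apply, Matrix.transpose_apply,
      Prod.mk.injEq, Fin.ext_iff, Fin.val_castSucc]
  · rw [if_neg]; omega
  · congr 1; apply propext; omega
  · congr 1; apply propext; omega
  · rw [if_neg]; omega

theorem canB_eFun (s : ℕ) (u v) : canB 2 ![s, s] (eFun s u) (eFun s v) = bB s u v := by
  rcases u with ⟨i, p⟩ | ⟨i, p⟩ <;> rcases v with ⟨j, q⟩ | ⟨j, q⟩ <;>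
    simp only [canB, eFun, bB, bF, Matrix.of_apply, fromBlocks_apply₁₁, fromBlocks_apply₁₂,
      fromBlocks_apply₂₁, fromBlocks_apply₂₂, ss_val, Matrix.zero_apply, Matrix.transpose_apply,
      Prod.mk.injEq, Fin.ext_iff, Fin.val_succ]
  · rw [if_neg]; omega
  · congr 1; apply propext; omega
  · congr 1; apply propext; omega
  · rw [if_neg]; omega

theorem stab_reindex {m n : Type*} [Fintype m] [Fintype n] (e : m ≃ n) (A B : Matrix n n ℂ) :
    Module.finrank ℂ (stabAlg (A.submatrix e e) (B.submatrix e e)) =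
      Module.finrank ℂ (stabAlg A B) := by
  let L : Matrix n n ℂ ≃ₗ[ℂ] Matrix m m ℂ := Matrix.reindexLinearEquiv ℂ ℂ e.symm e.symm
  have hL : ∀ M, L M = M.submatrix e e := fun M => rfl
  have hc : ∀ M X, congrDeriv (L M) (L X) = L (congrDeriv M X) := by
    intro M X
    simp only [hL, congrDeriv, LinearMap.coe_mk, AddHom.coe_mk, Matrix.transpose_submatrix,
      Matrix.submatrix_mul_equiv, Matrix.submatrix_add, Pi.add_apply]
  have hspan : ∀ Y, L Y ∈ Submodule.span ℂ {L A, L B} ↔ Y ∈ Submodule.span ℂ {A, B} := by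
    intro Y
    simp only [Submodule.mem_span_pair, ← map_smul, ← map_add, L.injective.eq_iff]
  have : stabAlg (A.submatrix e e) (B.submatrix e e) = (stabAlg A B).map (L : _ →ₗ[ℂ] _) := by
    rw [← hL, ← hL]
    ext Y
    obtain ⟨X, rfl⟩ := L.surjective Y
    have h2 : L X ∈ (stabAlg A B).map (L : _ →ₗ[ℂ] _) ↔ X ∈ stabAlg A B := by
      constructor
      · rintro ⟨Z, hZ, h⟩
        rwa [← L.injective h]
      · intro h; exact ⟨X, h, rfl⟩
    rw [h2]
    simp only [stabAlg, Submodule.mem_inf, Submodule.mem_comap, hc, hspan]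
  rw [this]
  exact LinearEquiv.finrank_map_eq L _

/-- For the balanced partition `(s, s)` of `r = 2s`, the Lie algebra
of the stabilizer of the canonical pencil of size `2r + 2` has dimension
`2s + 8 = r + 8` over ℂ. -/
theorem two_parts_balanced_stabilizer_dim (s : ℕ) (hs : 1 ≤ s) :
    Module.finrank ℂ (stabAlg (canA 2 ![s, s]) (canB 2 ![s, s])) = 2 * s + 8 := by
  rw [← finrank_block s hs, ← stab_reindex (Equiv.ofBijective _ (eFun_bij s))]
  rw [show (canA 2 ![s, s]).submatrix (Equiv.ofBijective _ (eFun_bij s))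
      (Equiv.ofBijective _ (eFun_bij s)) = bA s from by ext u v; exact canA_eFun s u v,
    show (canB 2 ![s, s]).submatrix (Equiv.ofBijective _ (eFun_bij s))
      (Equiv.ofBijective _ (eFun_bij s)) = bB s from by ext u v; exact canB_eFun s u v]
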